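/- Let A be a positive semidefinite Hermitian complex matrix with rows and columns indexed by a finite set V, let x be a vector with A x = 0, and let W ⊆ V be such that A u v = 0 for every u ∈ W and every v ∉ W with x_v ≠ 0. Let x̂ be the vector agreeing with x on W and equal to 0 elsewhere. Then A x̂ = 0. -/

import Mathlib

open scoped ComplexOrder

/-!
For positive semidefinite `A`, `yᴴ A y = 0` already forces `A y = 0`, so it suffices that `A y`
vanishes on the support of `y`. For `y = x̂` this holds because the rows of `A` indexed by `W`
cannot distinguish `x̂` from `x`.
-/

open scoped Matrix

theorem mulVec_indicator_apply_of_mul_eq_zero {m n R : Type*} [Fintype n]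
    [NonUnitalNonAssocSemiring R] {M : Matrix m n R} {x : n → R} {s : Set n} {i : m}
    (h : ∀ j ∉ s, M i j * x j = 0) : (M *ᵥ s.indicator x) i = (M *ᵥ x) i := by
  refine Finset.sum_congr rfl fun j _ => ?_
  by_cases hj : j ∈ s
  · rw [Set.indicator_of_mem hj]
  · rw [Set.indicator_of_notMem hj, mul_zero, h j hj]

section PosSemidef

variable {n 𝕜 : Type*} [Fintype n] [RCLike 𝕜] {A : Matrix n n 𝕜} {x : n → 𝕜}

theorem mulVec_eq_zero_of_eq_zero_on_support (hA : A.PosSemidef)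
    (h : ∀ i ∈ Function.support x, (A *ᵥ x) i = 0) : A *ᵥ x = 0 := by
  refine (hA.dotProduct_mulVec_zero_iff x).mp (Finset.sum_eq_zero fun i _ => ?_)
  by_cases hi : x i = 0
  · rw [Pi.star_apply, hi, star_zero, zero_mul]
  · rw [h i hi, mul_zero]

theorem psd_null_vector_restriction_general {W : Set n} (hA : A.PosSemidef)
    (hx : ∀ u ∈ W, (A *ᵥ x) u = 0) (hW : ∀ u ∈ W, ∀ v ∉ W, x v ≠ 0 → A u v = 0) :
    A *ᵥ W.indicator x = 0 := by
  refine mulVec_eq_zero_of_eq_zero_on_support hA fun u hu => ?_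
  have huW : u ∈ W := Set.mem_of_indicator_ne_zero hu
  have hrow : ∀ v ∉ W, A u v * x v = 0 := fun v hv =>
    mul_eq_zero.mpr (or_iff_not_imp_right.mpr (hW u huW v hv))
  rw [mulVec_indicator_apply_of_mul_eq_zero hrow, hx u huW]

end PosSemidef

/-- Let `A` be positive semidefinite with `A x = 0`, and let `W` be a set of indices
such that `A u v = 0` whenever `u ∈ W`, `v ∉ W`, and `x v ≠ 0`. Then the restriction
`x̂` of `x` to `W` also satisfies `A x̂ = 0`. -/
theorem psd_null_vector_restriction
    {V : Type*} [Fintype V] [DecidableEq V]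
    (A : Matrix V V ℂ) (hA : A.PosSemidef)
    (x : V → ℂ) (hx : A.mulVec x = 0)
    (W : Finset V)
    (hW : ∀ u ∈ W, ∀ v : V, v ∉ W → x v ≠ 0 → A u v = 0)
    (xhat : V → ℂ) (hxhat : ∀ u : V, xhat u = if u ∈ W then x u else 0) :
    A.mulVec xhat = 0 := by
  have hindicator : xhat = (W : Set V).indicator x := by
    ext u
    simp [hxhat, Set.indicator_apply]
  exact hindicator ▸ psd_null_vector_restriction_general hA (fun u _ => congrFun hx u) hW
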